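/- Let K₁ and K₂ be compact subsets of ℂ such that K₁ ∩ K₂ contains at most one point. If ℂ ∖ K₁ and ℂ ∖ K₂ are both connected, then ℂ ∖ (K₁ ∪ K₂) is connected. -/

import Mathlib

open Set Metric Bornology Filter

/-- A *hole* of `E` is a nonempty bounded connected component of `ℂ \ E`. -/
def IsHole (E C : Set ℂ) : Prop :=
  (∃ z ∈ Eᶜ, C = connectedComponentIn Eᶜ z) ∧ Bornology.IsBounded C

/-- A compact set `K` contained in an open set `Ω` is `Ω`-*convex* if every hole of `K`
contains a point of `ℂ \ Ω`. -/
def OmegaConvex (Ω K : Set ℂ) : Prop :=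
  ∀ C : Set ℂ, IsHole K C → (C ∩ Ωᶜ).Nonempty

/-- The *polynomial hull* of `K`: the union of `K` and all of its holes. -/
def polyHull (K : Set ℂ) : Set ℂ :=
  K ∪ {z | z ∈ Kᶜ ∧ Bornology.IsBounded (connectedComponentIn Kᶜ z)}

/-- A sequence of maps is *eventually injective* on `G`: for every compact `K ⊆ G`, the maps
are eventually injective on a neighbourhood of `K` in `G`. -/
def EventuallyInjective (G : Set ℂ) (φ : ℕ → ℂ → ℂ) : Prop :=
  ∀ K : Set ℂ, K ⊆ G → IsCompact K →
    ∃ N : ℕ, ∀ n ≥ N, ∃ U : Set ℂ, IsOpen U ∧ K ⊆ U ∧ U ⊆ G ∧ Set.InjOn (φ n) U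

/-- `f` is `(Φ, G, Ω)`-*universal*: the family `{f ∘ φ n : n ∈ ℕ}` is dense in `H(G)` for the
topology of locally uniform convergence, i.e. every `g` holomorphic on `G` can be approximated
uniformly on every compact subset of `G` by functions `f ∘ φ n`. -/
def UniversalFor (G : Set ℂ) (φ : ℕ → ℂ → ℂ) (f : ℂ → ℂ) : Prop :=
  ∀ g : ℂ → ℂ, DifferentiableOn ℂ g G →
    ∀ K : Set ℂ, K ⊆ G → IsCompact K → ∀ ε : ℝ, 0 < ε →
      ∃ n : ℕ, ∀ z ∈ K, ‖f (φ n z) - g z‖ < ε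

/-- `E` has no hole (for a domain: simple connectivity). -/
def HasNoHole (E : Set ℂ) : Prop := ¬ ∃ C : Set ℂ, IsHole E C

/-- A *Jordan curve*: the image of the unit circle under an injective continuous map. -/
def IsJordanCurve (C : Set ℂ) : Prop :=
  ∃ γ : ℂ → ℂ, ContinuousOn γ (Metric.sphere 0 1) ∧ Set.InjOn γ (Metric.sphere 0 1) ∧
    C = γ '' Metric.sphere 0 1

/-- A *Jordan arc*: the image of `[0,1]` under an injective continuous map. -/
def IsJordanArc (C : Set ℂ) : Prop :=
  ∃ γ : ℝ → ℂ, ContinuousOn γ (Set.Icc 0 1) ∧ Set.InjOn γ (Set.Icc 0 1) ∧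
    C = γ '' Set.Icc 0 1

/-- A compact set is *regular* if its boundary is a union of Jordan curves. -/
def RegularCompact (K : Set ℂ) : Prop :=
  ∃ 𝒞 : Set (Set ℂ), (∀ C ∈ 𝒞, IsJordanCurve C) ∧ frontier K = ⋃₀ 𝒞

/-- `K` is `Ω`-*connected*: it has no hole if `Ω` is simply connected, and has at least one hole
if `Ω` is not simply connected. -/
def OmegaConnectedSet (Ω K : Set ℂ) : Prop :=
  (HasNoHole Ω → HasNoHole K) ∧ (¬ HasNoHole Ω → ∃ C : Set ℂ, IsHole K C)

/-- Membership in the family `M(Ω)` of nonempty compact subsets of `Ω` that are regular,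
connected, `Ω`-connected and `Ω`-convex. -/
def MemM (Ω K : Set ℂ) : Prop :=
  K.Nonempty ∧ IsCompact K ∧ K ⊆ Ω ∧ RegularCompact K ∧ IsConnected K ∧
    OmegaConnectedSet Ω K ∧ OmegaConvex Ω K

/-- `f` is `(Φ, M)`-*universal*: for every `K ∈ M`, the restrictions of the `f ∘ φ n` to `K`
are dense in `C(K)`. -/
def MUniversal (M : Set (Set ℂ)) (φ : ℕ → ℂ → ℂ) (f : ℂ → ℂ) : Prop :=
  ∀ K ∈ M, ∀ h : ℂ → ℂ, ContinuousOn h K → ∀ ε : ℝ, 0 < ε →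
    ∃ n : ℕ, ∀ z ∈ K, ‖f (φ n z) - h z‖ < ε

/-!
By Eilenberg's criterion, a compact `K ⊆ ℂ` has connected complement if and only if, for every
`a ∉ K`, the function `z ↦ z - a` has a continuous logarithm on `K`. If the complement is connected,
move `a` to a point far from `K`: by a Rouché argument the existence of a logarithm does not change
along the way, and it is clear at the end. Conversely, if a bounded component `U` of `Kᶜ` contained
`a`, then gluing `z - a` outside `U` to the exponential of an extension of its logarithm inside `U`
would give a nowhere vanishing map on `ℂ`, so `z - a` would have a logarithm on a large circle
around `a`.

Logarithms on `K₁` and `K₂` differ by a constant in `2πiℤ` on the preconnected set `K₁ ∩ K₂`, so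
they can be glued. This is Janiszewski's theorem.
-/

open scoped Topology

/-- `f` has a *continuous logarithm* on `s`. The logarithm is a function on the whole space of which
only the restriction to `s` matters. -/
def HasContinuousLogOn {X : Type*} [TopologicalSpace X] (f : X → ℂ) (s : Set X) : Prop :=
  ∃ g : X → ℂ, ContinuousOn g s ∧ EqOn (Complex.exp ∘ g) f s

section ContinuousLog

variable {X : Type*} [TopologicalSpace X] {f f' g₁ g₂ : X → ℂ} {s t : Set X}

lemma eqOn_add_const_of_eqOn_exp (hs : IsPreconnected s) (hg₁ : ContinuousOn g₁ s)
    (hg₂ : ContinuousOn g₂ s) (h : EqOn (Complex.exp ∘ g₁) (Complex.exp ∘ g₂) s) {x : X}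
    (hx : x ∈ s) : EqOn g₁ (fun y => g₂ y + (g₁ x - g₂ x)) s := by
  have hexp : Complex.exp (g₁ x - g₂ x) = 1 := Complex.exp_eq_exp_iff_exp_sub_eq_one.1 (h hx)
  refine Complex.isCoveringMap_exp.eqOn_of_comp_eqOn hs hg₁ (hg₂.add continuousOn_const)
    (fun y hy => Subtype.ext ?_) hx (add_sub_cancel _ _).symm
  change Complex.exp (g₁ y) = Complex.exp (g₂ y + (g₁ x - g₂ x))
  rw [Complex.exp_add, hexp, mul_one]
  exact h hy

namespace HasContinuousLogOn

lemma mono (hf : HasContinuousLogOn f t) (hst : s ⊆ t) : HasContinuousLogOn f s :=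
  let ⟨g, hg, hexp⟩ := hf
  ⟨g, hg.mono hst, hexp.mono hst⟩

lemma congr (hf : HasContinuousLogOn f s) (h : EqOn f f' s) : HasContinuousLogOn f' s :=
  let ⟨g, hg, hexp⟩ := hf
  ⟨g, hg, hexp.trans h⟩

lemma const {c : ℂ} (hc : c ≠ 0) (s : Set X) : HasContinuousLogOn (fun _ => c) s :=
  ⟨fun _ => Complex.log c, continuousOn_const, fun _ _ => Complex.exp_log hc⟩

lemma continuousOn (hf : HasContinuousLogOn f s) : ContinuousOn f s :=
  let ⟨_, hg, hexp⟩ := hf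
  hg.cexp.congr hexp.symm

lemma ne_zero (hf : HasContinuousLogOn f s) {x : X} (hx : x ∈ s) : f x ≠ 0 :=
  let ⟨_, _, hexp⟩ := hf
  hexp hx ▸ Complex.exp_ne_zero _

lemma of_norm_sub_lt (hf : HasContinuousLogOn f s) (hf' : ContinuousOn f' s)
    (h : ∀ x ∈ s, ‖f' x - f x‖ < ‖f x‖) : HasContinuousLogOn f' s := by
  have hslit : ∀ x ∈ s, f' x / f x ∈ Complex.slitPlane := fun x hx => by
    have hquot : f' x / f x = 1 + (f' x - f x) / f x := by
      field_simp [hf.ne_zero hx]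
      ring
    rw [hquot]
    refine Complex.mem_slitPlane_of_norm_lt_one ?_
    rw [norm_div, div_lt_one (norm_pos_iff.2 (hf.ne_zero hx))]
    exact h x hx
  have hlog : ContinuousOn (fun x => Complex.log (f' x / f x)) s :=
    (hf'.div hf.continuousOn fun x hx => hf.ne_zero hx).clog hslit
  have ⟨g, hg, hexp⟩ := hf
  refine ⟨fun x => g x + Complex.log (f' x / f x), hg.add hlog, fun x hx => ?_⟩
  change Complex.exp (g x + Complex.log (f' x / f x)) = f' x
  rw [Complex.exp_add, show Complex.exp (g x) = f x from hexp hx,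
    Complex.exp_log (Complex.slitPlane_ne_zero (hslit x hx)), mul_div_cancel₀ _ (hf.ne_zero hx)]

lemma union (hs : IsClosed s) (ht : IsClosed t) (hst : IsPreconnected (s ∩ t))
    (hfs : HasContinuousLogOn f s) (hft : HasContinuousLogOn f t) :
    HasContinuousLogOn f (s ∪ t) := by
  classical
  obtain ⟨g₁, hg₁, hexp₁⟩ := hfs
  obtain ⟨g₂, hg₂, hexp₂⟩ := hft
  obtain ⟨g₃, hg₃, hexp₃, heq⟩ : ∃ g₃ : X → ℂ, ContinuousOn g₃ t ∧
      EqOn (Complex.exp ∘ g₃) f t ∧ EqOn g₁ g₃ (s ∩ t) := by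
    rcases (s ∩ t).eq_empty_or_nonempty with hempty | ⟨x, hx⟩
    · exact ⟨g₂, hg₂, hexp₂, hempty ▸ eqOn_empty _ _⟩
    · refine ⟨fun y => g₂ y + (g₁ x - g₂ x), hg₂.add continuousOn_const, fun y hy => ?_,
        eqOn_add_const_of_eqOn_exp hst (hg₁.mono inter_subset_left) (hg₂.mono inter_subset_right)
          ((hexp₁.mono inter_subset_left).trans (hexp₂.mono inter_subset_right).symm) hx⟩
      have hexp : Complex.exp (g₁ x - g₂ x) = 1 :=
        Complex.exp_eq_exp_iff_exp_sub_eq_one.1 ((hexp₁ hx.1).trans (hexp₂ hx.2).symm)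
      change Complex.exp (g₂ y + (g₁ x - g₂ x)) = f y
      rw [Complex.exp_add, hexp, mul_one]
      exact hexp₂ hy
  have hleft : EqOn (s.piecewise g₁ g₃) g₁ s := piecewise_eqOn s g₁ g₃
  have hright : EqOn (s.piecewise g₁ g₃) g₃ t := fun x hx => by
    by_cases hxs : x ∈ s
    · rw [piecewise_eq_of_mem _ _ _ hxs, heq ⟨hxs, hx⟩]
    · rw [piecewise_eq_of_notMem _ _ _ hxs]
  exact ⟨s.piecewise g₁ g₃, (hg₁.congr hleft).union_of_isClosed (hg₃.congr hright) hs ht,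
    ((hleft.comp_left).trans hexp₁).union ((hright.comp_left).trans hexp₃)⟩

lemma exists_continuous_eqOn_exp [NormalSpace X] (hs : IsClosed s)
    (hf : HasContinuousLogOn f s) : ∃ g : X → ℂ, Continuous g ∧ EqOn (Complex.exp ∘ g) f s := by
  obtain ⟨g, hg, hexp⟩ := hf
  obtain ⟨G, hG⟩ := ContinuousMap.exists_restrict_eq hs
    (⟨s.domRestrict g, continuousOn_iff_continuous_domRestrict.1 hg⟩ : C(s, ℂ))
  have hGg : EqOn G g s := fun x hx => DFunLike.congr_fun hG ⟨x, hx⟩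
  exact ⟨G, G.continuous, hGg.comp_left.trans hexp⟩

end HasContinuousLogOn

lemma hasContinuousLogOn_univ [SimplyConnectedSpace X] [LocallyPathConnectedSpace X]
    (hf : Continuous f) (h₀ : ∀ x, f x ≠ 0) : HasContinuousLogOn f univ := by
  obtain ⟨x₀⟩ : Nonempty X := inferInstance
  obtain ⟨g, ⟨-, hg⟩, -⟩ := Complex.isCoveringMapOn_exp.existsUnique_continuousMap_lifts
    ⟨f, hf⟩ (Complex.exp_log (h₀ x₀)) h₀
  exact ⟨g, g.continuous.continuousOn, fun x _ => congrFun hg x⟩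

end ContinuousLog

section Components

lemma frontier_connectedComponentIn_subset_compl {X : Type*} [TopologicalSpace X]
    [LocallyConnectedSpace X] {F : Set X} (hF : IsOpen F) (x : X) :
    frontier (connectedComponentIn F x) ⊆ Fᶜ := by
  rw [hF.connectedComponentIn.frontier_eq]
  rintro y ⟨hy_closure, hy⟩ hyF
  obtain ⟨z, hzy, hzx⟩ := mem_closure_iff.1 hy_closure _ hF.connectedComponentIn
    (mem_connectedComponentIn hyF)
  rw [connectedComponentIn_eq hzx, ← connectedComponentIn_eq hzy] at hy
  exact hy (mem_connectedComponentIn hyF)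

variable {E : Type*} [NormedAddCommGroup E] [NormedSpace ℝ E]

lemma isPreconnected_compl_closedBall (hE : 1 < Module.rank ℝ E) (x : E) (r : ℝ) :
    IsPreconnected (closedBall x r)ᶜ := by
  rcases lt_or_ge r 0 with hr | hr
  · rw [closedBall_eq_empty.2 hr, compl_empty]
    exact isPreconnected_univ
  have hpolar : (closedBall x r)ᶜ =
      (fun p : E × ℝ => x + p.2 • p.1) '' (sphere 0 1 ×ˢ Ioi r) := by
    ext z
    simp only [mem_compl_iff, mem_closedBall_iff_norm, not_le, mem_image, mem_prod,
      mem_sphere_zero_iff_norm, mem_Ioi, Prod.exists]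
    constructor
    · intro hz
      have hz₀ : ‖z - x‖ ≠ 0 := (hr.trans_lt hz).ne'
      refine ⟨‖z - x‖⁻¹ • (z - x), ‖z - x‖, ⟨?_, hz⟩, ?_⟩
      · rw [norm_smul, norm_inv, norm_norm, inv_mul_cancel₀ hz₀]
      · rw [smul_inv_smul₀ hz₀, add_sub_cancel]
    · rintro ⟨u, t, ⟨hu, ht⟩, rfl⟩
      rwa [add_sub_cancel_left, norm_smul, hu, mul_one, Real.norm_of_nonneg (hr.trans ht.le)]
  rw [hpolar]
  exact ((isPreconnected_sphere hE 0 1).prod isPreconnected_Ioi).image _ (by fun_prop)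

lemma isPreconnected_compl_of_not_isBounded_connectedComponentIn (hE : 1 < Module.rank ℝ E)
    {s : Set E} (hs : IsBounded s) (h : ∀ x ∈ sᶜ, ¬IsBounded (connectedComponentIn sᶜ x)) :
    IsPreconnected sᶜ := by
  obtain ⟨r, hsr⟩ := hs.subset_closedBall 0
  have hmeet : ∀ x ∈ sᶜ, (connectedComponentIn sᶜ x ∩ (closedBall 0 r)ᶜ).Nonempty := fun x hx =>
    inter_compl_nonempty_iff.2 fun hsub => h x hx (isBounded_closedBall.subset hsub)
  have hfar : ∀ x ∈ sᶜ, (closedBall 0 r)ᶜ ⊆ connectedComponentIn sᶜ x := fun x hx => by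
    obtain ⟨y, hyx, hyr⟩ := hmeet x hx
    rw [connectedComponentIn_eq hyx]
    exact (isPreconnected_compl_closedBall hE 0 r).subset_connectedComponentIn hyr
      (compl_subset_compl.2 hsr)
  refine isPreconnected_of_forall_pair fun x hx y hy => ?_
  obtain ⟨z, hzx, hzr⟩ := hmeet x hx
  have hzy := hfar y hy hzr
  refine ⟨_, connectedComponentIn_subset sᶜ x, mem_connectedComponentIn hx, ?_,
    isPreconnected_connectedComponentIn⟩
  rw [connectedComponentIn_eq hzx, ← connectedComponentIn_eq hzy]
  exact mem_connectedComponentIn hy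

end Components

lemma not_hasContinuousLogOn_sub_sphere (a : ℂ) {r : ℝ} (hr : 0 < r) :
    ¬HasContinuousLogOn (fun z => z - a) (sphere a r) := by
  -- Along the circle `g` is `log r + θ i` up to a constant, which is not `2π`-periodic in `θ`.
  rintro ⟨g, hg, hexp⟩
  have hmem : ∀ θ, circleMap a r θ ∈ sphere a r := circleMap_mem_sphere a hr.le
  have hcont : Continuous fun θ => g (circleMap a r θ) :=
    hg.comp_continuous (continuous_circleMap a r) hmem
  have heq : EqOn (Complex.exp ∘ fun θ => g (circleMap a r θ))
      (Complex.exp ∘ fun θ : ℝ => Complex.log r + θ * Complex.I) univ := fun θ _ => by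
    have hr₀ : (r : ℂ) ≠ 0 := mod_cast hr.ne'
    change Complex.exp (g (circleMap a r θ)) = Complex.exp (Complex.log r + θ * Complex.I)
    rw [show Complex.exp (g (circleMap a r θ)) = circleMap a r θ - a from hexp (hmem θ),
      Complex.exp_add, Complex.exp_log hr₀, circleMap_sub_center, circleMap_zero]
  have hturn := eqOn_add_const_of_eqOn_exp isPreconnected_univ hcont.continuousOn (by fun_prop)
    heq (mem_univ 0) (mem_univ (2 * Real.pi))
  have hperiod : circleMap a r (2 * Real.pi) = circleMap a r 0 := by
    simpa only [zero_add] using periodic_circleMap a r 0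
  have h2πI : (2 * Real.pi * Complex.I : ℂ) = 0 := by
    simp only [hperiod] at hturn
    push_cast at hturn
    linear_combination -hturn
  exact Complex.two_pi_I_ne_zero h2πI

lemma not_hasContinuousLogOn_sub_frontier {U : Set ℂ} (hU : IsBounded U) {a : ℂ} (ha : a ∈ U) :
    ¬HasContinuousLogOn (fun z => z - a) (frontier U) := by
  classical
  intro hlog
  obtain ⟨g, hg, hexp⟩ := hlog.exists_continuous_eqOn_exp isClosed_frontier
  set F : ℂ → ℂ := U.piecewise (Complex.exp ∘ g) fun z => z - a
  have hF : Continuous F := hg.cexp.piecewise (fun z hz => hexp hz) (by fun_prop)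
  have hF₀ : ∀ z, F z ≠ 0 := fun z => by
    by_cases hz : z ∈ U
    · simp only [F, piecewise_eq_of_mem _ _ _ hz]
      exact Complex.exp_ne_zero _
    · simp only [F, piecewise_eq_of_notMem _ _ _ hz]
      exact sub_ne_zero.2 fun h => hz (h ▸ ha)
  obtain ⟨r, hr, hUr⟩ := hU.subset_ball_lt 0 a
  have hFsphere : EqOn F (fun z => z - a) (sphere a r) := fun z hz =>
    piecewise_eq_of_notMem _ _ _ fun hzU => sphere_disjoint_ball.le_bot ⟨hz, hUr hzU⟩
  exact not_hasContinuousLogOn_sub_sphere a hr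
    (((hasContinuousLogOn_univ hF hF₀).mono (subset_univ _)).congr hFsphere)

section EilenbergCriterion

variable {K : Set ℂ} {a b : ℂ}

lemma exists_notMem_hasContinuousLogOn_sub (hK : IsBounded K) :
    ∃ a ∉ K, HasContinuousLogOn (fun z => z - a) K := by
  obtain ⟨r, hr, hKr⟩ := hK.subset_ball_lt 0 0
  have hnorm : ‖(r : ℂ)‖ = r := by rw [Complex.norm_real, Real.norm_of_nonneg hr.le]
  have hlt : ∀ z ∈ K, ‖z‖ < ‖(r : ℂ)‖ := fun z hz => by
    rw [hnorm]
    exact mem_ball_zero_iff.1 (hKr hz)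
  have hr₀ : -(r : ℂ) ≠ 0 := neg_ne_zero.2 (mod_cast hr.ne')
  refine ⟨r, fun hrK => (hlt _ hrK).false,
    (HasContinuousLogOn.const hr₀ K).of_norm_sub_lt (by fun_prop) fun z hz => ?_⟩
  rw [sub_neg_eq_add, sub_add_cancel, norm_neg]
  exact hlt z hz

lemma HasContinuousLogOn.sub_of_norm_sub_lt (ha : HasContinuousLogOn (fun z => z - a) K)
    (hab : ∀ z ∈ K, ‖b - a‖ < ‖z - a‖) : HasContinuousLogOn (fun z => z - b) K :=
  ha.of_norm_sub_lt (by fun_prop) fun z hz => by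
    rw [sub_sub_sub_cancel_left, norm_sub_rev]
    exact hab z hz

lemma eventually_hasContinuousLogOn_sub_iff (hK : IsClosed K) (ha : a ∉ K) :
    ∀ᶠ b in 𝓝 a, HasContinuousLogOn (fun z => z - a) K ↔ HasContinuousLogOn (fun z => z - b) K := by
  obtain ⟨δ, hδ, hball⟩ := Metric.isOpen_iff.1 hK.isOpen_compl a ha
  have hfar : ∀ z ∈ K, δ ≤ ‖z - a‖ := fun z hz =>
    not_lt.1 fun hlt => hball (mem_ball_iff_norm.2 hlt) hz
  filter_upwards [ball_mem_nhds a (half_pos hδ)] with b hb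
  rw [mem_ball_iff_norm] at hb
  refine ⟨fun hlog => hlog.sub_of_norm_sub_lt fun z hz => ?_,
    fun hlog => hlog.sub_of_norm_sub_lt fun z hz => ?_⟩
  · linarith [hfar z hz]
  · rw [norm_sub_rev a b]
    linarith [hfar z hz, norm_sub_le_norm_sub_add_norm_sub z b a]

lemma HasContinuousLogOn.sub_of_isPreconnected_compl (hK : IsClosed K) (hKc : IsPreconnected Kᶜ)
    (ha : a ∉ K) (hb : b ∉ K) (hlog : HasContinuousLogOn (fun z => z - a) K) :
    HasContinuousLogOn (fun z => z - b) K := by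
  refine hKc.induction₂'
    (fun c d => HasContinuousLogOn (fun z => z - c) K → HasContinuousLogOn (fun z => z - d) K)
    (fun c hc => ?_) (fun _ _ _ _ _ _ hcd hde => hde ∘ hcd) ha hb hlog
  filter_upwards [nhdsWithin_le_nhds (eventually_hasContinuousLogOn_sub_iff hK hc)] with d hcd
  exact ⟨hcd.1, hcd.2⟩

theorem isConnected_compl_iff_hasContinuousLogOn_sub (hK : IsCompact K) :
    IsConnected Kᶜ ↔ ∀ a ∉ K, HasContinuousLogOn (fun z => z - a) K := by
  refine ⟨fun hKc b hb => ?_, fun hlog => ⟨nonempty_compl.2 hK.ne_univ, ?_⟩⟩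
  · obtain ⟨a, ha, hlog⟩ := exists_notMem_hasContinuousLogOn_sub hK.isBounded
    exact hlog.sub_of_isPreconnected_compl hK.isClosed hKc.isPreconnected ha hb
  · refine isPreconnected_compl_of_not_isBounded_connectedComponentIn
      (by simp only [Complex.rank_real_complex, Nat.one_lt_ofNat]) hK.isBounded
      fun a ha hbdd => not_hasContinuousLogOn_sub_frontier hbdd (mem_connectedComponentIn ha)
        ((hlog a ha).mono ?_)
    simpa only [compl_compl] using
      frontier_connectedComponentIn_subset_compl hK.isClosed.isOpen_compl a

end EilenbergCriterion

theorem isConnected_compl_union_of_inter_subsingleton_general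
    (K₁ K₂ : Set ℂ) (h₁ : IsCompact K₁) (h₂ : IsCompact K₂)
    (hint : IsPreconnected (K₁ ∩ K₂))
    (hc₁ : IsConnected K₁ᶜ) (hc₂ : IsConnected K₂ᶜ) :
    IsConnected (K₁ ∪ K₂)ᶜ := by
  rw [isConnected_compl_iff_hasContinuousLogOn_sub h₁] at hc₁
  rw [isConnected_compl_iff_hasContinuousLogOn_sub h₂] at hc₂
  rw [isConnected_compl_iff_hasContinuousLogOn_sub (h₁.union h₂)]
  intro a ha
  rw [mem_union, not_or] at ha
  exact .union h₁.isClosed h₂.isClosed hint (hc₁ a ha.1) (hc₂ a ha.2)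

/-- Lemma `geo-lemma2`. -/
theorem isConnected_compl_union_of_inter_subsingleton
    (K₁ K₂ : Set ℂ) (h₁ : IsCompact K₁) (h₂ : IsCompact K₂)
    (hint : (K₁ ∩ K₂).Subsingleton)
    (hc₁ : IsConnected K₁ᶜ) (hc₂ : IsConnected K₂ᶜ) :
    IsConnected (K₁ ∪ K₂)ᶜ :=
  isConnected_compl_union_of_inter_subsingleton_general K₁ K₂ h₁ h₂ hint.isPreconnected hc₁ hc₂
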